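/- For σ > 0, Ψ ∈ ℝ^{n×d}, y ∈ ℝⁿ, with Σ = (I_d + σ⁻²ΨᵀΨ)⁻¹, μ = σ⁻²ΣΨᵀy, and K̂ = ΨΨᵀ, one has KL(N(0,I_d) ‖ N(μ,Σ)) = ½[ σ⁻² Tr(K̂) + yᵀ(σ⁻²I_n − (σ²I_n + K̂)⁻¹)y + n log σ² − log det(σ²I_n + K̂) ]. -/

import Mathlib

open Matrix Real MeasureTheory

/-- Density of the multivariate Gaussian `N(μ, S)` on `ℝ^d`. -/
noncomputable def gaussDensity {d : ℕ} (μ : Fin d → ℝ) (S : Matrix (Fin d) (Fin d) ℝ)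
    (θ : Fin d → ℝ) : ℝ :=
  (Real.sqrt ((2 * π) ^ d * S.det))⁻¹ *
    Real.exp (-(1 / 2) * ((θ - μ) ⬝ᵥ (S⁻¹ *ᵥ (θ - μ))))

/-!
Under `θ ∼ N(0, I_d)` the log density ratio is `½[log det Σ + (θ - μ)ᵀΣ⁻¹(θ - μ) - θᵀθ]`, and
`E[(X - a)ᵀB(X - a)] = Tr(B Cov X) + (E X - a)ᵀB(E X - a)`, so the divergence is
`½[Tr Σ⁻¹ - d + μᵀΣ⁻¹μ + log det Σ]`. For `Σ⁻¹ = I_d + σ⁻²ΨᵀΨ`, the trace term is `σ⁻² Tr K̂` by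
cyclicity, the Weinstein–Aronszajn identity gives `det(σ²I_n + K̂) = σ²ⁿ det Σ⁻¹`, and the Woodbury
identity rewrites `μᵀΣ⁻¹μ = σ⁻⁴ yᵀΨΣΨᵀy` as `yᵀ(σ⁻²I_n - (σ²I_n + K̂)⁻¹)y`.
-/

section LinearAlgebra

variable {m n : Type*} [Fintype m] [Fintype n]

lemma dotProduct_mulVec_eq_sum_sum {R : Type*} [CommSemiring R]
    (x : m → R) (B : Matrix m n R) (y : n → R) :
    x ⬝ᵥ (B *ᵥ y) = ∑ i, ∑ j, B i j * (x i * y j) := by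
  simp only [dotProduct, mulVec, Finset.mul_sum]
  exact Finset.sum_congr rfl fun i _ => Finset.sum_congr rfl fun j _ => by ring

lemma transpose_mulVec_dotProduct_mulVec_transpose_mulVec {R : Type*} [CommSemiring R]
    (U : Matrix m n R) (B : Matrix n n R) (y : m → R) :
    (Uᵀ *ᵥ y) ⬝ᵥ (B *ᵥ (Uᵀ *ᵥ y)) = y ⬝ᵥ ((U * B * Uᵀ) *ᵥ y) := by
  rw [← mulVec_mulVec, ← mulVec_mulVec, dotProduct_mulVec y, mulVec_transpose]

variable [DecidableEq n]

lemma inv_mulVec_dotProduct_mulVec_inv_mulVec {R : Type*} [CommRing R] {A : Matrix n n R}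
    (hA : IsUnit A.det) (b : n → R) :
    (A⁻¹ *ᵥ b) ⬝ᵥ (A *ᵥ (A⁻¹ *ᵥ b)) = b ⬝ᵥ (A⁻¹ *ᵥ b) := by
  rw [mulVec_mulVec, mul_nonsing_inv _ hA, one_mulVec, dotProduct_comm]

variable [DecidableEq m]

lemma det_smul_one_add_mul {K : Type*} [Field K] {s : K} (hs : s ≠ 0)
    (U : Matrix m n K) (V : Matrix n m K) :
    (s • 1 + U * V).det = s ^ Fintype.card m * (1 + s⁻¹ • (V * U)).det := by
  have factor : s • 1 + U * V = s • (1 + U * (s⁻¹ • V)) := by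
    rw [Matrix.mul_smul, smul_add, smul_inv_smul₀ hs]
  rw [factor, det_smul, det_one_add_mul_comm, Matrix.smul_mul]

lemma inv_smul_one_add_mul {K : Type*} [Field K] {s : K} (hs : s ≠ 0)
    (U : Matrix m n K) (V : Matrix n m K) (h : IsUnit (1 + s⁻¹ • (V * U))) :
    (s • 1 + U * V)⁻¹ = s⁻¹ • 1 - s⁻¹ • s⁻¹ • (U * (1 + s⁻¹ • (V * U))⁻¹ * V) := by
  have hs_unit : IsUnit (s • (1 : Matrix m m K)) := (isUnit_iff_isUnit_det _).2 (by simp [hs])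
  have inv_scalar : (s • (1 : Matrix m m K))⁻¹ = s⁻¹ • 1 :=
    inv_eq_right_inv (by simp [smul_smul, hs])
  have woodbury := add_mul_mul_inv_eq_sub (s • 1) U 1 V hs_unit isUnit_one
    (by simpa [inv_scalar] using h)
  simpa [inv_scalar] using woodbury

end LinearAlgebra

section QuadraticForms

open ProbabilityTheory

variable {Ω ι : Type*} [Fintype ι] {mΩ : MeasurableSpace Ω} {P : Measure Ω} {X : Ω → ι → ℝ}

lemma integrable_dotProduct_mulVec_self (hX : ∀ i, MemLp (X · i) 2 P) (B : Matrix ι ι ℝ) :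
    Integrable (fun ω => X ω ⬝ᵥ (B *ᵥ X ω)) P := by
  simp only [dotProduct_mulVec_eq_sum_sum]
  exact integrable_finsetSum _ fun i _ => integrable_finsetSum _ fun j _ =>
    ((hX i).integrable_mul (hX j)).const_mul (B i j)

lemma integral_dotProduct_mulVec_self (hX : ∀ i, MemLp (X · i) 2 P) (B : Matrix ι ι ℝ) :
    ∫ ω, X ω ⬝ᵥ (B *ᵥ X ω) ∂P = ∑ i, ∑ j, B i j * ∫ ω, X ω i * X ω j ∂P := by
  have integrable_term (i j : ι) : Integrable (fun ω => B i j * (X ω i * X ω j)) P :=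
    ((hX i).integrable_mul (hX j)).const_mul (B i j)
  simp only [dotProduct_mulVec_eq_sum_sum]
  rw [integral_finsetSum _ fun i _ => integrable_finsetSum _ fun j _ => integrable_term i j]
  simp only [integral_finsetSum _ fun j _ => integrable_term _ j, integral_const_mul]

variable [IsProbabilityMeasure P]

lemma integral_sub_const_mul_sub_const {Y Z : Ω → ℝ} (hY : MemLp Y 2 P) (hZ : MemLp Z 2 P)
    (a b : ℝ) :
    ∫ ω, (Y ω - a) * (Z ω - b) ∂P = cov[Y, Z; P] + (P[Y] - a) * (P[Z] - b) := by
  have hY₁ : Integrable Y P := hY.integrable one_le_two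
  have hZ₁ : Integrable Z P := hZ.integrable one_le_two
  have cov_shift := covariance_eq_sub (hY.sub (memLp_const a)) (hZ.sub (memLp_const b))
  have cov_eq : cov[Y - fun _ => a, Z - fun _ => b; P] = cov[Y, Z; P] :=
    (covariance_sub_const_left hY₁ a).trans (covariance_sub_const_right hZ₁ b)
  simp only [cov_eq, Pi.mul_apply, Pi.sub_apply, integral_sub hY₁ (integrable_const a),
    integral_sub hZ₁ (integrable_const b), integral_const, probReal_univ, one_smul] at cov_shift
  linarith

lemma integral_sub_dotProduct_mulVec_sub (hX : ∀ i, MemLp (X · i) 2 P)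
    (B : Matrix ι ι ℝ) (a : ι → ℝ) :
    ∫ ω, (X ω - a) ⬝ᵥ (B *ᵥ (X ω - a)) ∂P =
      (B * of fun i j => cov[(X · i), (X · j); P]).trace +
        ((fun i => ∫ ω, X ω i ∂P) - a) ⬝ᵥ (B *ᵥ ((fun i => ∫ ω, X ω i ∂P) - a)) := by
  have hXa (i : ι) : MemLp (fun ω => (X ω - a) i) 2 P := (hX i).sub (memLp_const (a i))
  rw [integral_dotProduct_mulVec_self hXa]
  simp only [Pi.sub_apply, integral_sub_const_mul_sub_const (hX _) (hX _),
    dotProduct_mulVec_eq_sum_sum, mul_add, Finset.sum_add_distrib, trace, diag_apply, mul_apply,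
    of_apply, covariance_comm]

end QuadraticForms

section StandardGaussian

open ProbabilityTheory

lemma pi_withDensity_ofReal {ι : Type*} [Fintype ι] {α : ι → Type*}
    [∀ i, MeasurableSpace (α i)] (ν : ∀ i, Measure (α i)) [∀ i, SigmaFinite (ν i)]
    {f : ∀ i, α i → ℝ} (hf : ∀ i, Integrable (f i) (ν i)) (hf_nonneg : ∀ i x, 0 ≤ f i x) :
    Measure.pi (fun i => (ν i).withDensity fun x => ENNReal.ofReal (f i x)) =
      (Measure.pi ν).withDensity fun x => ENNReal.ofReal (∏ i, f i (x i)) := by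
  have (i : ι) : IsFiniteMeasure ((ν i).withDensity fun x => ENNReal.ofReal (f i x)) :=
    isFiniteMeasure_withDensity_ofReal (hf i).2
  refine Measure.pi_eq fun s hs => ?_
  have hf_restrict (i : ι) : Integrable (f i) ((ν i).restrict (s i)) := (hf i).restrict
  rw [withDensity_apply _ (MeasurableSet.univ_pi hs), Measure.restrict_pi_pi,
    ← ofReal_integral_eq_lintegral_ofReal (Integrable.fintype_prod_dep hf_restrict)
      (.of_forall fun x => Finset.prod_nonneg fun i _ => hf_nonneg i (x i)),
    integral_fintype_prod_eq_prod,
    ENNReal.ofReal_prod_of_nonneg fun i _ => integral_nonneg (hf_nonneg i)]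
  refine Finset.prod_congr rfl fun i _ => ?_
  rw [withDensity_apply _ (hs i),
    ofReal_integral_eq_lintegral_ofReal (hf_restrict i) (.of_forall (hf_nonneg i))]

lemma gaussDensity_nonneg {d : ℕ} (μ : Fin d → ℝ) (S : Matrix (Fin d) (Fin d) ℝ)
    (θ : Fin d → ℝ) : 0 ≤ gaussDensity μ S θ := by
  unfold gaussDensity
  positivity

lemma measurable_gaussDensity {d : ℕ} (μ : Fin d → ℝ) (S : Matrix (Fin d) (Fin d) ℝ) :
    Measurable (gaussDensity μ S) := by
  unfold gaussDensity dotProduct mulVec dotProduct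
  fun_prop

lemma gaussDensity_zero_one {d : ℕ} (θ : Fin d → ℝ) :
    gaussDensity 0 1 θ = ∏ i, gaussianPDFReal 0 1 (θ i) := by
  have sqrt_pow : √((2 * π) ^ d) = √(2 * π) ^ d := by
    rw [Real.sqrt_eq_iff_mul_self_eq (by positivity) (by positivity), ← mul_pow,
      Real.mul_self_sqrt (by positivity)]
  simp only [gaussDensity, gaussianPDFReal, det_one, mul_one, sub_zero, inv_one, one_mulVec,
    NNReal.coe_one, Finset.prod_mul_distrib, Finset.prod_const, Finset.card_univ,
    Fintype.card_fin, ← Real.exp_sum, sqrt_pow, inv_pow, dotProduct, Finset.mul_sum]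
  congr! 3
  ring

lemma pi_gaussianReal_eq_withDensity_gaussDensity (d : ℕ) :
    Measure.pi (fun _ : Fin d => gaussianReal 0 1) =
      volume.withDensity fun θ => ENNReal.ofReal (gaussDensity 0 1 θ) := by
  simp only [gaussDensity_zero_one, gaussianReal_of_var_ne_zero _ one_ne_zero]
  exact pi_withDensity_ofReal _ (fun _ => integrable_gaussianPDFReal 0 1)
    fun _ => gaussianPDFReal_nonneg 0 1

lemma integral_gaussDensity_zero_one_mul {d : ℕ} (f : (Fin d → ℝ) → ℝ) :
    ∫ θ, gaussDensity 0 1 θ * f θ =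
      ∫ x, f x.ofLp ∂stdGaussian (EuclideanSpace ℝ (Fin d)) := by
  calc ∫ θ, gaussDensity 0 1 θ * f θ
    _ = ∫ θ, f θ ∂Measure.pi (fun _ : Fin d => gaussianReal 0 1) := by
      rw [pi_gaussianReal_eq_withDensity_gaussDensity,
        integral_withDensity_eq_integral_toReal_smul
          (measurable_gaussDensity 0 1).ennreal_ofReal (by simp)]
      simp only [ENNReal.toReal_ofReal (gaussDensity_nonneg 0 1 _), smul_eq_mul]
    _ = ∫ x, f x.ofLp ∂stdGaussian (EuclideanSpace ℝ (Fin d)) := by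
      rw [← map_pi_eq_stdGaussian]
      exact (integral_map_equiv (MeasurableEquiv.toLp 2 (Fin d → ℝ))
        fun x : EuclideanSpace ℝ (Fin d) => f x.ofLp).symm

section Moments

variable {ι : Type*} [Fintype ι]

lemma memLp_eval_stdGaussian (i : ι) :
    MemLp (fun x : EuclideanSpace ℝ ι => x.ofLp i) 2 (stdGaussian (EuclideanSpace ℝ ι)) :=
  IsGaussian.memLp_dual _ (EuclideanSpace.proj i) 2 (by simp)

lemma integral_eval_stdGaussian (i : ι) :
    ∫ x, x.ofLp i ∂stdGaussian (EuclideanSpace ℝ ι) = 0 :=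
  integral_strongDual_stdGaussian (EuclideanSpace.proj i)

lemma integrable_sub_dotProduct_mulVec_sub_stdGaussian (B : Matrix ι ι ℝ) (a : ι → ℝ) :
    Integrable (fun x : EuclideanSpace ℝ ι => (x.ofLp - a) ⬝ᵥ (B *ᵥ (x.ofLp - a)))
      (stdGaussian (EuclideanSpace ℝ ι)) :=
  integrable_dotProduct_mulVec_self
    (fun i => (memLp_eval_stdGaussian i).sub (memLp_const (a i))) B

lemma covariance_eval_stdGaussian [DecidableEq ι] (i j : ι) :
    cov[fun x : EuclideanSpace ℝ ι => x.ofLp i, fun x => x.ofLp j;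
        stdGaussian (EuclideanSpace ℝ ι)] =
      (1 : Matrix ι ι ℝ) i j := by
  rw [← multivariateGaussian_zero_one, covariance_eval_multivariateGaussian PosSemidef.one]

lemma integral_sub_dotProduct_mulVec_sub_stdGaussian (B : Matrix ι ι ℝ) (a : ι → ℝ) :
    ∫ x, (x.ofLp - a) ⬝ᵥ (B *ᵥ (x.ofLp - a)) ∂stdGaussian (EuclideanSpace ℝ ι) =
      B.trace + a ⬝ᵥ (B *ᵥ a) := by
  classical
  rw [integral_sub_dotProduct_mulVec_sub memLp_eval_stdGaussian]
  have mean_zero : (fun i => ∫ x, x.ofLp i ∂stdGaussian (EuclideanSpace ℝ ι)) = 0 :=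
    funext integral_eval_stdGaussian
  have cov_one : (of fun i j => cov[fun x => x.ofLp i, fun x => x.ofLp j;
      stdGaussian (EuclideanSpace ℝ ι)]) = (1 : Matrix ι ι ℝ) :=
    Matrix.ext covariance_eval_stdGaussian
  rw [mean_zero, cov_one, mul_one, zero_sub, mulVec_neg, neg_dotProduct_neg]

end Moments

end StandardGaussian

section KullbackLeibler

open ProbabilityTheory

variable {d : ℕ} {S : Matrix (Fin d) (Fin d) ℝ}

lemma log_gaussDensity (hS : 0 < S.det) (μ θ : Fin d → ℝ) :
    log (gaussDensity μ S θ) =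
      -(1 / 2) * (d * log (2 * π) + log S.det + (θ - μ) ⬝ᵥ (S⁻¹ *ᵥ (θ - μ))) := by
  rw [gaussDensity, log_mul (by positivity) (exp_ne_zero _), log_exp, log_inv,
    log_sqrt (by positivity), log_mul (by positivity) hS.ne', log_pow]
  ring

lemma gaussDensity_pos (hS : 0 < S.det) (μ θ : Fin d → ℝ) : 0 < gaussDensity μ S θ := by
  unfold gaussDensity
  positivity

lemma log_gaussDensity_zero_one_div (hS : 0 < S.det) (μ θ : Fin d → ℝ) :
    log (gaussDensity 0 1 θ / gaussDensity μ S θ) =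
      (1 / 2) * (log S.det + (θ - μ) ⬝ᵥ (S⁻¹ *ᵥ (θ - μ)) - θ ⬝ᵥ θ) := by
  have det_one_pos : (0 : ℝ) < (1 : Matrix (Fin d) (Fin d) ℝ).det := by simp
  rw [log_div (gaussDensity_pos det_one_pos 0 θ).ne' (gaussDensity_pos hS μ θ).ne',
    log_gaussDensity det_one_pos, log_gaussDensity hS, det_one, log_one, inv_one, one_mulVec,
    sub_zero]
  ring

lemma kl_gaussDensity_zero_one (hS : 0 < S.det) (μ : Fin d → ℝ) :
    ∫ θ, gaussDensity 0 1 θ * log (gaussDensity 0 1 θ / gaussDensity μ S θ) =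
      (1 / 2) * (S⁻¹.trace - d + μ ⬝ᵥ (S⁻¹ *ᵥ μ) + log S.det) := by
  have quad_integrable := integrable_sub_dotProduct_mulVec_sub_stdGaussian S⁻¹ μ
  have sq_integrable : Integrable (fun x : EuclideanSpace ℝ (Fin d) => x.ofLp ⬝ᵥ x.ofLp)
      (stdGaussian (EuclideanSpace ℝ (Fin d))) := by
    simpa using integrable_sub_dotProduct_mulVec_sub_stdGaussian (1 : Matrix (Fin d) (Fin d) ℝ) 0
  have integral_sq : ∫ x, x.ofLp ⬝ᵥ x.ofLp ∂stdGaussian (EuclideanSpace ℝ (Fin d)) = d := by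
    simpa using integral_sub_dotProduct_mulVec_sub_stdGaussian (1 : Matrix (Fin d) (Fin d) ℝ) 0
  simp only [integral_gaussDensity_zero_one_mul, log_gaussDensity_zero_one_div hS]
  rw [integral_const_mul,
    integral_sub ((integrable_const _).fun_add quad_integrable) sq_integrable,
    integral_add (integrable_const _) quad_integrable, integral_const, probReal_univ, one_smul,
    integral_sq, integral_sub_dotProduct_mulVec_sub_stdGaussian]
  ring

end KullbackLeibler

section Posterior

variable {m n : Type*} [Fintype m] [DecidableEq n] {s : ℝ}

/-- Posterior precision matrix `Σ⁻¹ = I + s⁻¹UᵀU` of the weights in Bayesian linear regression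
with design matrix `U`, noise variance `s` and a standard Gaussian prior. -/
noncomputable def posteriorPrecision (s : ℝ) (U : Matrix m n ℝ) : Matrix n n ℝ :=
  1 + s⁻¹ • (Uᵀ * U)

lemma posDef_posteriorPrecision [Finite n] (hs : 0 < s) (U : Matrix m n ℝ) :
    (posteriorPrecision s U).PosDef := by
  rw [posteriorPrecision, ← conjTranspose_eq_transpose_of_trivial]
  exact PosDef.one.add_posSemidef
    ((posSemidef_conjTranspose_mul_self U).smul (inv_nonneg.2 hs.le))

variable [Fintype n]

/-- Posterior mean `s⁻¹ΣUᵀy` of the weights in the regression of `posteriorPrecision`, given the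
observations `y`. -/
noncomputable def posteriorMean (s : ℝ) (U : Matrix m n ℝ) (y : m → ℝ) : n → ℝ :=
  s⁻¹ • ((posteriorPrecision s U)⁻¹ *ᵥ (Uᵀ *ᵥ y))

lemma trace_posteriorPrecision (s : ℝ) (U : Matrix m n ℝ) :
    (posteriorPrecision s U).trace = Fintype.card n + s⁻¹ * (U * Uᵀ).trace := by
  rw [posteriorPrecision, trace_add, trace_one, trace_smul, smul_eq_mul, trace_mul_comm]

variable [DecidableEq m]

lemma log_det_smul_one_add_mul_transpose (hs : 0 < s) (U : Matrix m n ℝ) :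
    log (s • 1 + U * Uᵀ).det = Fintype.card m * log s + log (posteriorPrecision s U).det := by
  have hdet : (posteriorPrecision s U).det ≠ 0 := (posDef_posteriorPrecision hs U).det_pos.ne'
  rw [det_smul_one_add_mul hs.ne', ← posteriorPrecision, log_mul (pow_pos hs _).ne' hdet,
    log_pow]

lemma posteriorMean_dotProduct_posteriorPrecision_mulVec (hs : 0 < s) (U : Matrix m n ℝ)
    (y : m → ℝ) :
    posteriorMean s U y ⬝ᵥ (posteriorPrecision s U *ᵥ posteriorMean s U y) =
      y ⬝ᵥ ((s⁻¹ • (1 : Matrix m m ℝ) - (s • (1 : Matrix m m ℝ) + U * Uᵀ)⁻¹) *ᵥ y) := by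
  have hA : IsUnit (posteriorPrecision s U) := (posDef_posteriorPrecision hs U).isUnit
  calc posteriorMean s U y ⬝ᵥ (posteriorPrecision s U *ᵥ posteriorMean s U y)
    _ = s⁻¹ * (s⁻¹ * ((Uᵀ *ᵥ y) ⬝ᵥ ((posteriorPrecision s U)⁻¹ *ᵥ (Uᵀ *ᵥ y)))) := by
      rw [posteriorMean, mulVec_smul, smul_dotProduct, dotProduct_smul,
        inv_mulVec_dotProduct_mulVec_inv_mulVec ((isUnit_iff_isUnit_det _).1 hA),
        smul_eq_mul, smul_eq_mul]
    _ = y ⬝ᵥ ((s⁻¹ • s⁻¹ • (U * (posteriorPrecision s U)⁻¹ * Uᵀ)) *ᵥ y) := by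
      rw [transpose_mulVec_dotProduct_mulVec_transpose_mulVec, smul_mulVec, smul_mulVec,
        dotProduct_smul, dotProduct_smul, smul_eq_mul, smul_eq_mul]
    _ = y ⬝ᵥ ((s⁻¹ • (1 : Matrix m m ℝ) - (s • (1 : Matrix m m ℝ) + U * Uᵀ)⁻¹) *ᵥ y) := by
      rw [inv_smul_one_add_mul hs.ne' U Uᵀ hA, ← posteriorPrecision, sub_sub_cancel]

end Posterior

/-- For `σ > 0`, `Ψ ∈ ℝ^{n×d}`, `y ∈ ℝⁿ`, with `Σ = (I_d + σ⁻²ΨᵀΨ)⁻¹`, `μ = σ⁻²ΣΨᵀy`,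
and `K̂ = ΨΨᵀ`, the KL divergence `KL(N(0, I_d) ‖ N(μ, Σ))` equals
`½[σ⁻² Tr(K̂) + yᵀ(σ⁻²I_n − (σ²I_n + K̂)⁻¹)y + n log σ² − log det(σ²I_n + K̂)]`. -/
theorem kl_conditional_readout_posterior (n d : ℕ) (Ψ : Matrix (Fin n) (Fin d) ℝ)
    (y : Fin n → ℝ) (σ : ℝ) (hσ : 0 < σ)
    (S : Matrix (Fin d) (Fin d) ℝ) (μ : Fin d → ℝ) (Khat : Matrix (Fin n) (Fin n) ℝ)
    (hS : S = (1 + (σ ^ 2)⁻¹ • (Ψᵀ * Ψ))⁻¹)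
    (hmu : μ = (σ ^ 2)⁻¹ • (S *ᵥ (Ψᵀ *ᵥ y)))
    (hK : Khat = Ψ * Ψᵀ) :
    ∫ θ : Fin d → ℝ,
        gaussDensity 0 1 θ * Real.log (gaussDensity 0 1 θ / gaussDensity μ S θ)
      = (1 / 2) * ((σ ^ 2)⁻¹ * Khat.trace
          + y ⬝ᵥ (((σ ^ 2)⁻¹ • (1 : Matrix (Fin n) (Fin n) ℝ)
              - ((σ ^ 2) • (1 : Matrix (Fin n) (Fin n) ℝ) + Khat)⁻¹) *ᵥ y)
          + n * Real.log (σ ^ 2)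
          - Real.log ((σ ^ 2) • (1 : Matrix (Fin n) (Fin n) ℝ) + Khat).det) := by
  have hs : 0 < σ ^ 2 := by positivity
  have hA := posDef_posteriorPrecision hs Ψ
  obtain rfl : S = (posteriorPrecision (σ ^ 2) Ψ)⁻¹ := hS
  obtain rfl : μ = posteriorMean (σ ^ 2) Ψ y := hmu
  subst hK
  rw [kl_gaussDensity_zero_one hA.inv.det_pos,
    nonsing_inv_nonsing_inv _ hA.det_pos.ne'.isUnit, trace_posteriorPrecision,
    posteriorMean_dotProduct_posteriorPrecision_mulVec hs, det_nonsing_inv,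
    Ring.inverse_eq_inv', log_inv, log_det_smul_one_add_mul_transpose hs, Fintype.card_fin,
    Fintype.card_fin]
  ring
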